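/- The number of permutations of [n] containing exactly two occurrences of the pattern 321 such that the two occurrences have the same middle position (the same letter playing the role of the '2' in both occurrences) is 2·C^{(8)}_{n−4}, with the convention C^{(k)}_m = 0 for m < 0. -/

import Mathlib

/-!
Let `b` be the common middle letter of the two occurrences. If `u` larger letters stand to its left
and `v` smaller letters to its right, then `u * v = 2`, so `(u, v)` is `(2, 1)` or `(1, 2)`
(`commonMid_eq`); the reverse-complement exchanges the two cases (`card_oneTwo`), which accounts for
the factor 2.

In the case `(2, 1)`, counting letters from 0, `b` stands at position `b + 1` (`mid_position`). Let
`c < c'` be the larger letters on its left and `a` the smaller letter on its right. The word up to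
`b`, with `b` replaced by `a`, is order-isomorphic to a permutation `σ` of `b + 2` letters whose last
letter is not one of its two largest; the word `c c'` followed by what stands right of `b`, with
`a` replaced by `b`, is a permutation `τ` of `b, …, n - 1` whose smallest letter is not one of the
first two. The only occurrences of 321 in the original permutation are `c b a` and `c' b a` exactly
when `σ` and `τ` avoid 321, and `(σ, τ)` determines the permutation (`glue_mem`, `glue_inj`,
`exists_glue`). This is Burstein's argument for permutations with one occurrence of 321.

The 321-avoiding permutations of `m + 3` letters whose last letter is not one of the two largest are
counted by `ballot 4 m` (`card_lastLe_two`), through a recurrence obtained by deleting the last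
letter, and the same number counts the possible `τ`, by the inverse of the reverse-complement
(`card_minLate`). Summing over `b` gives the convolution of `ballot 4` with itself, which is
`ballot 8` (`ballot_conv`).

All permutations are handled as permutations of `ℤ` with support in an interval. Then `σ` and `τ`
live in the same group, gluing is a product in it, and shifts and reversals are conjugations.
-/
/-- The ballot number `C^{(k)}_n = C(2n+k-1, n) - C(2n+k-1, n-1)`, with `C(a,-1) = 0`. -/
def ballot (k n : ℕ) : ℕ :=
  Nat.choose (2 * n + k - 1) n - (if n = 0 then 0 else Nat.choose (2 * n + k - 1) (n - 1))

/-- The ballot number with an integer subscript: `C^{(k)}_m = 0` for `m < 0`. -/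
def ballotZ (k : ℕ) (m : ℤ) : ℕ := if 0 ≤ m then ballot k m.toNat else 0

/-- An occurrence of the pattern 321 in a permutation of `{0,…,n-1}`: a triple of
positions `i < j < k` (here `t = (i, j, k)`) with `π i > π j > π k`. -/
def IsOcc321 {n : ℕ} (π : Equiv.Perm (Fin n)) (t : Fin n × Fin n × Fin n) : Prop :=
  t.1 < t.2.1 ∧ t.2.1 < t.2.2 ∧ π t.2.2 < π t.2.1 ∧ π t.2.1 < π t.1

/-- The number of occurrences of the pattern 321 in a permutation. -/
noncomputable def occ321Count (n : ℕ) (π : Equiv.Perm (Fin n)) : ℕ :=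
  Nat.card {t : Fin n × Fin n × Fin n // IsOcc321 π t}


/-! ### Ballot numbers -/

theorem ballot_zero_right (k : ℕ) : ballot k 0 = 1 := by simp [ballot]

theorem ballot_zero_left (n : ℕ) : ballot 0 (n + 1) = 0 := by
  have h := Nat.choose_symm_half n
  simp only [ballot, Nat.add_eq_zero_iff, one_ne_zero, and_false, if_false]
  have e : 2 * (n + 1) + 0 - 1 = 2 * n + 1 := by omega
  rw [e, h]; simp

/-- Pascal's rule for ballot numbers, the coefficientwise form of
`C^{k+1} = C^k + x C^{k+2}` where `C` is the Catalan generating function. -/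
theorem ballot_succ (k n : ℕ) :
    ballot (k + 1) (n + 1) = ballot k (n + 1) + ballot (k + 2) n := by
  have h1 : (2 * n + k + 1).choose n ≤ (2 * n + k + 1).choose (n + 1) := by
    rcases Nat.eq_zero_or_pos k with rfl | hk
    · exact (Nat.choose_symm_half n).ge
    · exact Nat.choose_le_succ_of_lt_half_left (by omega)
  have e1 : 2 * (n + 1) + (k + 1) - 1 = 2 * n + k + 1 + 1 := by omega
  have e2 : 2 * (n + 1) + k - 1 = 2 * n + k + 1 := by omega
  have e3 : 2 * n + (k + 2) - 1 = 2 * n + k + 1 := by omega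
  simp only [ballot, e1, e2, e3, Nat.add_eq_zero_iff, one_ne_zero, and_false, if_false,
    Nat.add_sub_cancel]
  rw [Nat.choose_succ_succ]
  rcases n with _ | n
  · simp
  · have h2 : (2 * (n + 1) + k + 1).choose n ≤ (2 * (n + 1) + k + 1).choose (n + 1) :=
      Nat.choose_le_succ_of_lt_half_left (by omega)
    rw [Nat.choose_succ_succ (2 * (n + 1) + k + 1) n]
    simp only [Nat.add_eq_zero_iff, one_ne_zero, and_false, if_false, Nat.add_sub_cancel]
    simp only [Nat.succ_eq_add_one] at *
    omega

/-- The coefficientwise form of `C^k * C^l = C^{k+l}`. -/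
theorem ballot_conv (l n : ℕ) : ∀ k : ℕ,
    ∑ p ∈ Finset.HasAntidiagonal.antidiagonal n, ballot k p.1 * ballot l p.2 = ballot (k + l) n := by
  induction n with
  | zero => intro k; simp [ballot_zero_right]
  | succ n ih =>
    intro k
    induction k with
    | zero =>
      rw [Finset.Nat.sum_antidiagonal_succ]
      simp [ballot_zero_right, ballot_zero_left]
    | succ k ihk =>
      have h := ih (k + 2)
      rw [Finset.Nat.sum_antidiagonal_succ] at ihk ⊢
      simp only [ballot_succ k, add_mul, Finset.sum_add_distrib, ballot_zero_right] at ihk ⊢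
      rw [h, ← add_assoc, ihk, show k + 1 + l = (k + l) + 1 by ring, ballot_succ,
        show k + 2 + l = k + l + 2 by ring]

/-! ### Permutations of the integers with bounded support -/

open Equiv (Perm)

/-- `π` fixes every integer outside the interval `[lo, hi)`; such permutations of `ℤ` encode
the permutations of the letters `lo, …, hi - 1`. -/
def SuppIn (lo hi : ℤ) (π : Perm ℤ) : Prop := ∀ x, (x < lo ∨ hi ≤ x) → π x = x

/-- `(i, j, k)` is an occurrence of 321 in `π`. -/
def Occ (π : Perm ℤ) (i j k : ℤ) : Prop := i < j ∧ j < k ∧ π k < π j ∧ π j < π i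

/-- `π` avoids 321. -/
def Avoids (π : Perm ℤ) : Prop := ∀ i j k, ¬ Occ π i j k

theorem SuppIn.mem {lo hi : ℤ} {π : Perm ℤ} (h : SuppIn lo hi π) {x : ℤ} (h1 : lo ≤ x)
    (h2 : x < hi) : lo ≤ π x ∧ π x < hi := by
  by_contra hc
  have := h (π x) (by omega)
  have := π.injective this
  omega

theorem SuppIn.lt {lo hi : ℤ} {π : Perm ℤ} (h : SuppIn lo hi π) {x : ℤ}
    (h2 : x < hi) : π x < hi := by
  by_contra hc
  have := h (π x) (by omega)
  have := π.injective this
  omega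

theorem SuppIn.ge {lo hi : ℤ} {π : Perm ℤ} (h : SuppIn lo hi π) {x : ℤ}
    (h2 : lo ≤ x) : lo ≤ π x := by
  by_contra hc
  have := h (π x) (by omega)
  have := π.injective this
  omega

theorem SuppIn.inv {lo hi : ℤ} {π : Perm ℤ} (h : SuppIn lo hi π) : SuppIn lo hi π⁻¹ := by
  intro x hx
  rw [Equiv.Perm.inv_eq_iff_eq, h x hx]

instance finite_suppIn (lo hi : ℤ) : Finite {π : Perm ℤ | SuppIn lo hi π} := by
  have : Finite {x : ℤ // lo ≤ x ∧ x < hi} := (Set.finite_Ico lo hi).to_subtype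
  have := Finite.of_equiv _ (Equiv.Perm.subtypeEquivSubtypePerm fun x : ℤ => lo ≤ x ∧ x < hi)
  exact Finite.of_injective (β := {f : Perm ℤ // ∀ a, ¬ (lo ≤ a ∧ a < hi) → f a = a})
    (fun π => ⟨π.1, fun a ha => π.2 a (by omega)⟩)
    (fun a b h => Subtype.ext (congrArg (fun x => x.1) h))

theorem finite_of_suppIn {lo hi : ℤ} {S : Set (Perm ℤ)} (h : ∀ π ∈ S, SuppIn lo hi π) :
    S.Finite :=
  Set.Finite.subset (Set.toFinite {π : Perm ℤ | SuppIn lo hi π}) h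

/-- The cycle `hi ↦ i`, `x ↦ x + 1` for `i ≤ x < hi`; composing with it on the left appends
a last letter `i` at position `hi`. -/
def cyc (i hi : ℤ) (h : i ≤ hi) : Perm ℤ where
  toFun x := if x = hi then i else if i ≤ x ∧ x < hi then x + 1 else x
  invFun x := if x = i then hi else if i < x ∧ x ≤ hi then x - 1 else x
  left_inv x := by grind
  right_inv x := by grind

theorem cyc_apply {i hi : ℤ} (h : i ≤ hi) (x : ℤ) :
    cyc i hi h x = if x = hi then i else if i ≤ x ∧ x < hi then x + 1 else x := rfl

/-! ### Counting 321-avoiding permutations by their last letter -/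

/-- 321-avoiding permutations of `0, …, n - 1` in which the `j` largest letters appear in
increasing order. -/
def TopInc (n j : ℤ) : Set (Perm ℤ) :=
  {π | SuppIn 0 n π ∧ Avoids π ∧ ∀ x y, x < y → n - j ≤ π x → n - j ≤ π y → π x < π y}

/-- 321-avoiding permutations of `0, …, n - 1` whose last letter is at most `n - 1 - j`. -/
def LastLe (n j : ℤ) : Set (Perm ℤ) :=
  {π | SuppIn 0 n π ∧ Avoids π ∧ π (n - 1) ≤ n - 1 - j}

/-- Deleting the last letter `n - j` of a 321-avoiding permutation of `0, …, n`. -/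
theorem card_last_eq (n j : ℤ) (hj : 0 ≤ j) (hjn : j ≤ n) :
    ({π | SuppIn 0 (n + 1) π ∧ Avoids π ∧ π n = n - j} : Set (Perm ℤ)).ncard
      = (TopInc n j).ncard := by
  symm
  have hc : n - j ≤ n := by omega
  refine Set.ncard_congr (fun σ _ => cyc (n - j) n hc * σ) ?_ ?_ ?_
  · rintro σ ⟨h1, h2, h3⟩
    have hn : σ n = n := h1 n (by omega)
    refine ⟨?_, ?_, ?_⟩
    · intro x hx
      have := h1 x (by omega)
      simp only [Equiv.Perm.coe_mul, Function.comp, cyc_apply, this]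
      grind
    · rintro x y z ⟨hxy, hyz, h4, h5⟩
      have a1 := h2 x y z
      have a2 := h3 x y hxy
      have a3 := fun h => h1 z (Or.inr h)
      have a4 := fun h => h1 y (Or.inr h)
      have a5 : y < n → σ y < n := h1.lt
      have a6 : x < n → σ x < n := h1.lt
      have a7 : z < n → σ z < n := h1.lt
      simp only [Occ, Equiv.Perm.coe_mul, Function.comp, cyc_apply] at *
      grind
    · simp [cyc_apply, hn]
  · intro σ τ _ _ h
    exact mul_left_cancel h
  · rintro π ⟨h1, h2, h3⟩
    refine ⟨(cyc (n - j) n hc)⁻¹ * π, ⟨?_, ?_, ?_⟩, by simp⟩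
    · intro x hx
      rw [Equiv.Perm.mul_apply, Equiv.Perm.inv_eq_iff_eq, cyc_apply]
      have := h1 x
      grind
    · rintro x y z ⟨hxy, hyz, h4, h5⟩
      have a1 := h2 x y z
      have a2 := h2 x y n
      obtain ⟨σ, rfl⟩ : ∃ σ, π = cyc (n - j) n hc * σ :=
        ⟨(cyc (n - j) n hc)⁻¹ * π, by simp⟩
      simp only [Occ, Equiv.Perm.coe_mul, Function.comp, cyc_apply, inv_mul_cancel_left] at *
      have hs : σ n = n := by grind
      have i1 : σ x = n → x = n := fun h => σ.injective (by rw [h, hs])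
      have i2 : σ y = n → y = n := fun h => σ.injective (by rw [h, hs])
      have i3 : σ z = n → z = n := fun h => σ.injective (by rw [h, hs])
      have a3 := h1 x
      have a4 := h1 y
      have a5 := h1 z
      simp only [Equiv.Perm.coe_mul, Function.comp, cyc_apply] at *
      grind
    · rintro x y hxy h4 h5
      have a2 := h2 x y n
      obtain ⟨σ, rfl⟩ : ∃ σ, π = cyc (n - j) n hc * σ :=
        ⟨(cyc (n - j) n hc)⁻¹ * π, by simp⟩
      simp only [Occ, Equiv.Perm.coe_mul, Function.comp, cyc_apply, inv_mul_cancel_left] at *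
      have hs : σ n = n := by grind
      have i0 : σ x = σ y → x = y := fun h => σ.injective h
      have i1 : σ x = n → x = n := fun h => σ.injective (by rw [h, hs])
      have i2 : σ y = n → y = n := fun h => σ.injective (by rw [h, hs])
      have a3 := h1 x
      have a4 := h1 y
      have a6 : x < n + 1 → _ := h1.lt
      simp only [Equiv.Perm.coe_mul, Function.comp, cyc_apply] at *
      grind

theorem card_lastLe_step (n j : ℤ) (hj : 0 ≤ j) (hjn : j ≤ n) :
    (LastLe (n + 1) j).ncard = (TopInc n j).ncard + (LastLe (n + 1) (j + 1)).ncard := by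
  rw [← card_last_eq n j hj hjn, ← Set.ncard_union_eq ?_
    (finite_of_suppIn fun π h => h.1) (finite_of_suppIn fun π h => h.1)]
  · congr 1
    ext π
    simp only [LastLe, Set.mem_union, Set.mem_ofPred_eq, add_sub_cancel_right]
    have : π n ≤ n - j ↔ π n = n - j ∨ π n ≤ n - (j + 1) := by omega
    tauto
  · rw [Set.disjoint_left]
    rintro π ⟨-, -, h⟩ ⟨-, -, h'⟩
    simp only [add_sub_cancel_right] at h'
    omega

/-- Either `n` is the last letter, or it precedes a last letter below all of the `j + 1` largest
letters, which then increase automatically. -/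
theorem card_topInc_step (n j : ℤ) (hj : 0 ≤ j) (hn : 0 ≤ n) :
    (TopInc (n + 1) (j + 1)).ncard = (TopInc n j).ncard + (LastLe (n + 1) (j + 1)).ncard := by
  rw [← Set.ncard_union_eq ?_
    (finite_of_suppIn fun π h => h.1) (finite_of_suppIn fun π h => h.1)]
  · congr 1
    ext π
    simp only [LastLe, TopInc, Set.mem_union, Set.mem_ofPred_eq, add_sub_cancel_right,
      add_sub_add_right_eq_sub]
    constructor
    · rintro ⟨h1, h2, h3⟩
      by_cases hp : π n = n
      · left
        refine ⟨fun x hx => ?_, h2, h3⟩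
        by_cases hx' : x = n
        · rw [hx', hp]
        · exact h1 x (by omega)
      · right
        refine ⟨h1, h2, ?_⟩
        -- the position of the largest letter `n` precedes the last position
        have e : π (π⁻¹ n) = n := by simp
        have h4 : π⁻¹ n < n + 1 := h1.inv.lt (by omega)
        have h5 : π⁻¹ n ≠ n := by rintro h; rw [h] at e; exact hp e
        have h6 := h3 (π⁻¹ n) n (by omega)
        have h7 : π n < n + 1 := h1.lt (by omega)
        omega
    · rintro (⟨h1, h2, h3⟩ | ⟨h1, h2, h3⟩)
      · exact ⟨fun x hx => h1 x (by omega), h2, h3⟩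
      · refine ⟨h1, h2, fun x y hxy hx hy => ?_⟩
        have h4 := h2 x y n
        have h5 := h1 y
        have h6 : x < n + 1 → π x < n + 1 := h1.lt
        have h7 : π x ≠ π y := fun h => by have := π.injective h; omega
        have h8 : y ≠ n := by rintro rfl; omega
        simp only [Occ] at h4
        have h9 := h1 x
        by_contra
        omega
  · rw [Set.disjoint_left]
    rintro π ⟨h1, -, -⟩ ⟨-, -, h'⟩
    have := h1 n (by omega)
    simp only [add_sub_cancel_right] at h'
    omega

theorem topInc_zero (n : ℤ) : TopInc (n + 1) 0 = LastLe (n + 1) 0 := by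
  ext π
  simp only [TopInc, LastLe, Set.mem_ofPred_eq]
  refine and_congr_right fun h1 => and_congr_right fun h2 => ?_
  have h3 : π n < n + 1 := h1.lt (by omega)
  simp only [add_sub_cancel_right, sub_zero]
  refine ⟨fun _ => by omega, fun _ x y hxy hx hy => ?_⟩
  have hx' : n + 1 ≤ x := by
    by_contra h
    have := h1.lt (x := x) (by omega)
    omega
  rw [h1 x (by omega), h1 y (by omega)]
  exact hxy

theorem card_topInc_zero_zero : (TopInc 0 0).ncard = 1 := by
  rw [Set.ncard_eq_one]
  refine ⟨1, ?_⟩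
  ext π
  simp only [TopInc, Set.mem_ofPred_eq, Set.mem_singleton_iff]
  constructor
  · rintro ⟨h, -, -⟩
    ext x
    simpa using h x (by omega)
  · rintro rfl
    exact ⟨fun x _ => rfl, fun x y z ⟨h1, h2, h3, h4⟩ => absurd h4 (by simp; omega),
      fun x y h _ _ => h⟩

theorem card_lastLe_empty (n j : ℤ) (hn : 1 ≤ n) (h : n ≤ j) : (LastLe n j).ncard = 0 := by
  convert Set.ncard_empty (Perm ℤ)
  refine Set.eq_empty_of_forall_notMem fun π ⟨h1, h2, h3⟩ => ?_
  have := h1.ge (x := n - 1) (by omega)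
  omega

/-- Eliminating `TopInc` between `card_lastLe_step` and `card_topInc_step` gives the recurrence
`ballot_succ`. -/
theorem card_lastLe_add (m : ℕ) : ∀ j : ℕ,
    (LastLe ((m : ℤ) + j + 1) j).ncard = ballot (j + 2) m := by
  induction m with
  | zero =>
    intro j
    rw [ballot_zero_right]
    have key : ∀ j : ℕ, (LastLe ((j : ℤ) + 1) j).ncard = (TopInc j j).ncard := fun j => by
      rw [card_lastLe_step _ _ (by omega) le_rfl, card_lastLe_empty _ _ (by omega) le_rfl]
      rfl
    have key2 : (TopInc j j).ncard = 1 := by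
      induction j with
      | zero => simpa using card_topInc_zero_zero
      | succ j ih =>
        push_cast
        rw [card_topInc_step _ _ (by omega) (by omega), ih,
          card_lastLe_empty _ _ (by omega) le_rfl]
    simpa [key2] using key j
  | succ m ih =>
    intro j
    have step : ∀ j : ℕ, (LastLe ((m : ℤ) + 1 + j + 1) j).ncard
        = (TopInc ((m : ℤ) + 1 + j) j).ncard + ballot (j + 3) m := fun j => by
      rw [card_lastLe_step _ _ (by omega) (by omega)]
      have := ih (j + 1)
      push_cast at this
      rw [show (m : ℤ) + 1 + j + 1 = m + (j + 1) + 1 by ring, this]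
    push_cast
    induction j with
    | zero =>
      rw [step]
      have h := ih 0
      have h2 := topInc_zero (m : ℤ)
      simp only [Nat.cast_zero, add_zero] at h ⊢
      rw [h2, h, ballot_succ 1, ballot_succ 0, ballot_zero_left]
      simp
    | succ j ihj =>
      rw [step]
      push_cast
      rw [← add_assoc, card_topInc_step _ _ (by omega) (by omega),
        ← card_lastLe_step _ _ (by omega) (by omega), ihj, ← ballot_succ]

theorem card_lastLe_two (m : ℕ) : (LastLe ((m : ℤ) + 3) 2).ncard = ballot 4 m := by
  rw [← card_lastLe_add m 2]; push_cast; rw [add_assoc]; rfl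

/-! ### Reflections -/

/-- The reflection `x ↦ n - 1 - x`, which reverses the interval `[0, n)`. -/
def reflect (n : ℤ) : Perm ℤ := Equiv.subLeft (n - 1)

theorem reflect_apply (n x : ℤ) : reflect n x = n - 1 - x := rfl

/-- The inverse of the reverse-complement. -/
def invRC (n : ℤ) (σ : Perm ℤ) : Perm ℤ := reflect n * σ⁻¹ * reflect n

theorem invRC_apply (n x : ℤ) (σ : Perm ℤ) : invRC n σ x = n - 1 - σ⁻¹ (n - 1 - x) := rfl

theorem reflect_mul_self (n : ℤ) : reflect n * reflect n = 1 := by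
  ext x; simp [reflect_apply]

theorem reflect_inv (n : ℤ) : (reflect n)⁻¹ = reflect n := inv_eq_of_mul_eq_one_left (reflect_mul_self n)

theorem invRC_invRC (n : ℤ) (σ : Perm ℤ) : invRC n (invRC n σ) = σ := by
  simp only [invRC, mul_inv_rev, reflect_inv, inv_inv]
  simp only [← mul_assoc, reflect_mul_self, one_mul]
  rw [mul_assoc, reflect_mul_self, mul_one]

theorem Avoids.invRC {n : ℤ} {σ : Perm ℤ} (h : Avoids σ) : Avoids (invRC n σ) := by
  rintro i j k ⟨h1, h2, h3, h4⟩
  simp only [invRC_apply] at h3 h4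
  refine h (σ⁻¹ (n - 1 - i)) (σ⁻¹ (n - 1 - j)) (σ⁻¹ (n - 1 - k)) ⟨by omega, by omega, ?_, ?_⟩ <;>
  · simp
    omega

/-- 321-avoiding permutations of `b, …, n - 1` in which neither of the first two letters is
the smallest one. -/
def MinLate (b n : ℤ) : Set (Perm ℤ) :=
  {σ | SuppIn b n σ ∧ Avoids σ ∧ ∀ x, σ x = b → b + 2 ≤ x}

theorem card_minLate (b n : ℤ) : (MinLate b n).ncard = (LastLe (n - b) 2).ncard := by
  refine Set.ncard_congr (fun σ _ => invRC n σ) ?_ ?_ ?_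
  · rintro σ ⟨h1, h2, h3⟩
    refine ⟨fun x hx => ?_, h2.invRC, ?_⟩
    · have := h1.inv (n - 1 - x) (by omega)
      rw [invRC_apply, this]
      omega
    · have := h3 (σ⁻¹ b) (by simp)
      rw [invRC_apply, show n - 1 - (n - b - 1) = b by ring]
      omega
  · intro σ τ _ _ h
    rw [← invRC_invRC n σ, ← invRC_invRC n τ, h]
  · rintro τ ⟨h1, h2, h3⟩
    refine ⟨invRC n τ, ⟨fun x hx => ?_, h2.invRC, fun x hx => ?_⟩, invRC_invRC n τ⟩
    · have := h1.inv (n - 1 - x) (by omega)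
      rw [invRC_apply, this]
      omega
    · rw [invRC_apply] at hx
      have e : τ⁻¹ (n - 1 - x) = n - b - 1 := by omega
      rw [Equiv.Perm.inv_eq_iff_eq] at e
      omega

/-! ### Gluing two 321-avoiding permutations -/

/-- `π` is glued from a permutation `σ` of `0, …, b + 1` and a permutation `τ` of
`b, …, n - 1`, which overlap in the letters `b` and `b + 1`: perform `σ`, then `τ`, then exchange
the last letter `a = σ (b + 1)` of `σ` with `b`, so that `b` ends up at position `b + 1` and `a`
at the position of the smallest letter of `τ`. -/
structure Glue (n b : ℤ) (π σ τ : Perm ℤ) : Prop where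
  hσ : SuppIn 0 (b + 2) σ
  last_lt : σ (b + 1) < b
  hτ : SuppIn b n τ
  min_late : ∀ x, τ x = b → b + 2 ≤ x
  eq : π = Equiv.swap (σ (b + 1)) b * τ * σ

namespace Glue

variable {n b : ℤ} {π σ τ : Perm ℤ}

theorem apply (h : Glue n b π σ τ) (x : ℤ) :
    π x = Equiv.swap (σ (b + 1)) b (τ (σ x)) := by rw [h.eq]; rfl

/-! The three ranges of letters: `π` agrees with `σ` on its small letters left of `b + 1`, with
`τ ∘ σ` on the two large ones, and with `τ` to the right, apart from `a` replacing `b`. -/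

theorem apply_mid (h : Glue n b π σ τ) : π (b + 1) = b := by
  rw [h.apply, h.hτ (σ (b + 1)) (Or.inl h.last_lt), Equiv.swap_apply_left]

theorem apply_small (h : Glue n b π σ τ) {x : ℤ} (hx : x ≤ b) (hs : σ x < b) : π x = σ x := by
  rw [h.apply, h.hτ (σ x) (Or.inl hs), Equiv.swap_apply_of_ne_of_ne _ (by omega)]
  intro e
  have := σ.injective e
  omega

theorem apply_large (h : Glue n b π σ τ) {x : ℤ} (hx : x ≤ b) (hs : b ≤ σ x) :
    π x = τ (σ x) ∧ b < π x ∧ (σ x = b ∨ σ x = b + 1) := by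
  have h1 : σ x < b + 2 := h.hσ.lt (by omega)
  have h2 : b ≤ τ (σ x) := h.hτ.ge hs
  have h3 : τ (σ x) ≠ b := fun e => by have := h.min_late _ e; omega
  have h4 := h.last_lt
  have h5 : π x = τ (σ x) := by
    rw [h.apply, Equiv.swap_apply_of_ne_of_ne (by omega) h3]
  omega

theorem apply_right (h : Glue n b π σ τ) {x : ℤ} (hx : b + 2 ≤ x) :
    (τ x = b ∧ π x = σ (b + 1)) ∨ (b < τ x ∧ π x = τ x) := by
  have h2 : b ≤ τ x := h.hτ.ge (by omega)
  have h4 := h.last_lt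
  have e := h.apply x
  rw [h.hσ x (Or.inr hx)] at e
  by_cases hb : τ x = b
  · rw [hb, Equiv.swap_apply_right] at e
    exact Or.inl ⟨hb, e⟩
  · rw [Equiv.swap_apply_of_ne_of_ne (by omega) hb] at e
    exact Or.inr ⟨by omega, e⟩

/-- On the positions up to `b`, `π` and `σ` have the same order pattern. -/
theorem lt_iff (h : Glue n b π σ τ) (hb : τ b < τ (b + 1)) {x y : ℤ} (hx : x ≤ b) (hy : y ≤ b) :
    π x < π y ↔ σ x < σ y := by
  have i1 : σ x = σ y → π x = π y := fun e => by rw [σ.injective e]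
  rcases lt_or_ge (σ x) b with h1 | h1 <;> rcases lt_or_ge (σ y) b with h2 | h2
  · rw [h.apply_small hx h1, h.apply_small hy h2]
  · have := h.apply_small hx h1
    have := h.apply_large hy h2
    omega
  · have := h.apply_large hx h1
    have := h.apply_small hy h2
    omega
  · obtain ⟨e1, -, f1⟩ := h.apply_large hx h1
    obtain ⟨e2, -, f2⟩ := h.apply_large hy h2
    rcases f1 with f1 | f1 <;> rcases f2 with f2 | f2 <;> rw [f1] at e1 <;> rw [f2] at e2 <;> omega

/-- Beyond position `b`, every letter of `π` is at least `σ (b + 1)`. -/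
theorem last_le (h : Glue n b π σ τ) {x : ℤ} (hx : b + 1 ≤ x) : σ (b + 1) ≤ π x := by
  have := h.last_lt
  rcases hx.eq_or_lt with rfl | hx
  · rw [h.apply_mid]; omega
  · have := h.apply_right (x := x) (by omega)
    omega

theorem last_lt_iff (h : Glue n b π σ τ) {y : ℤ} (hy : y ≤ b) :
    σ (b + 1) < π y ↔ σ (b + 1) < σ y := by
  have := h.last_lt
  rcases lt_or_ge (σ y) b with h2 | h2
  · rw [h.apply_small hy h2]
  · have := h.apply_large hy h2
    omega

/-- An occurrence of 321 in `π` with middle position before `b + 1` yields one in `σ`, and one with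
middle position after `b + 1` yields one in `τ`. -/
theorem occ_mid (h : Glue n b π σ τ) (hb : τ b < τ (b + 1)) (h1 : Avoids σ) (h2 : Avoids τ)
    {i j k : ℤ} (ho : Occ π i j k) : j = b + 1 := by
  obtain ⟨hij, hjk, hkj, hji⟩ := ho
  by_contra hj
  have hl := h.last_lt
  rcases lt_or_gt_of_ne hj with hj | hj
  · have hji' := (h.lt_iff hb (by omega) (by omega)).1 hji
    rcases le_or_gt k b with hk | hk
    · exact h1 i j k ⟨hij, hjk, (h.lt_iff hb hk (by omega)).1 hkj, hji'⟩
    · have := h.last_le (x := k) (by omega)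
      exact h1 i j (b + 1) ⟨hij, hj, (h.last_lt_iff (by omega)).1 (by omega), hji'⟩
  · have hk := h.last_le (x := k) (by omega)
    have hjr := h.apply_right (x := j) (by omega)
    have hkr := h.apply_right (x := k) (by omega)
    have hjk' : τ k < τ j := by omega
    rcases le_or_gt i b with hi | hi
    · have : b ≤ σ i := by
        by_contra hc
        have := h.apply_small hi (by omega)
        omega
      have := h.apply_large hi this
      exact h2 (σ i) j k ⟨by omega, by omega, hjk', by omega⟩
    · rcases Int.lt_or_eq_of_le (show b + 1 ≤ i by omega) with hi | rfl
      · have := h.apply_right (x := i) (by omega)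
        exact h2 i j k ⟨hij, hjk, hjk', by omega⟩
      · have := h.apply_mid
        omega

theorem avoids_left (h : Glue n b π σ τ) (hb : τ b < τ (b + 1))
    (ho : ∀ i j k, Occ π i j k → j = b + 1) : Avoids σ := by
  rintro i j k ⟨hij, hjk, hkj, hji⟩
  have hl := h.last_lt
  have hk : k ≤ b + 1 := by
    by_contra hk
    have := h.hσ k (by omega)
    have := h.hσ j
    have : j < b + 2 → σ j < b + 2 := h.hσ.lt
    omega
  have hji' := (h.lt_iff hb (show j ≤ b by omega) (show i ≤ b by omega)).2 hji
  rcases Int.lt_or_eq_of_le hk with hk | rfl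
  · have := ho i j k ⟨hij, hjk, (h.lt_iff hb (by omega) (by omega)).2 hkj, hji'⟩
    omega
  · -- the last letter of `σ` is read off in `π` at the position of the minimum of `τ`
    have e : τ (τ⁻¹ b) = b := by simp
    have hq := h.min_late _ e
    have hr := h.apply_right hq
    have := (h.last_lt_iff (show j ≤ b by omega)).2 hkj
    have := ho i j (τ⁻¹ b) ⟨hij, by omega, by omega, hji'⟩
    omega

/-- The positions in `π` corresponding to the letters `b` and `b + 1` of `σ`. -/
theorem inv_le (h : Glue n b π σ τ) {y : ℤ} (hy : y = b ∨ y = b + 1) :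
    σ⁻¹ y ≤ b := by
  have hl := h.last_lt
  have e : σ (σ⁻¹ y) = y := by simp
  have h1 : σ⁻¹ y < b + 2 := h.hσ.inv.lt (by omega)
  have h2 : σ⁻¹ y ≠ b + 1 := fun h => by rw [h] at e; omega
  omega

theorem avoids_right (h : Glue n b π σ τ) (hb : τ b < τ (b + 1))
    (ho : ∀ i j k, Occ π i j k → j = b + 1) : Avoids τ := by
  rintro i j k ⟨hij, hjk, hkj, hji⟩
  have hl := h.last_lt
  have hi : b ≤ i := by
    by_contra hi
    have := h.hτ i (by omega)
    have := h.hτ j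
    have : b ≤ j → b ≤ τ j := h.hτ.ge
    omega
  have hj : b + 2 ≤ j := by
    by_contra hj
    have e1 : i = b := by omega
    have e2 : j = b + 1 := by omega
    subst e1 e2
    omega
  have hjr := h.apply_right hj
  have hkr := h.apply_right (x := k) (by omega)
  have hmin : τ k ≠ τ j := by omega
  have hbk : b ≤ τ k := h.hτ.ge (by omega)
  rcases lt_or_ge i (b + 2) with hi2 | hi2
  · have e : σ (σ⁻¹ i) = i := by simp
    have h1 := h.inv_le (y := i) (by omega)
    have h2 := h.apply_large h1 (by omega)
    rw [e] at h2
    have := ho (σ⁻¹ i) j k ⟨by omega, hjk, by omega, by omega⟩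
    omega
  · have := h.apply_right hi2
    have := ho i j k ⟨hij, hjk, by omega, by omega⟩
    omega

end Glue

/-- Permutations of `0, …, n - 1` with exactly two occurrences of 321, both using the letter `b`
at position `b + 1` in the middle and the same last letter. -/
def TwoOneAt (n b : ℤ) : Set (Perm ℤ) :=
  {π | SuppIn 0 n π ∧ π (b + 1) = b ∧ ∃ x₁ x₂ q, x₁ < x₂ ∧
    (∀ i, i < b + 1 ∧ b < π i ↔ i = x₁ ∨ i = x₂) ∧ (∀ k, b + 1 < k ∧ π k < b ↔ k = q) ∧
    ∀ i j k, Occ π i j k → j = b + 1}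

/-- The first two letters of a member of `MinLate b n` are in increasing order. -/
theorem MinLate.lt {n b : ℤ} {τ : Perm ℤ} (h : τ ∈ MinLate b n) : τ b < τ (b + 1) := by
  obtain ⟨h1, h2, h3⟩ := h
  have e : τ (τ⁻¹ b) = b := by simp
  have hq := h3 _ e
  have h4 := h2 b (b + 1) (τ⁻¹ b)
  have h5 : b ≤ τ (b + 1) := h1.ge (by omega)
  have h6 : τ (b + 1) ≠ b := fun h => by have := h3 _ h; omega
  have h7 : τ (b + 1) ≠ τ b := fun h => by have := τ.injective h; omega
  simp only [Occ, e] at h4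
  omega

/-- The glued permutation of `σ` and `τ`, as described in `Glue`. -/
def glue (b : ℤ) (σ τ : Perm ℤ) : Perm ℤ := Equiv.swap (σ (b + 1)) b * τ * σ

theorem glue_spec {n b : ℤ} {σ τ : Perm ℤ} (h1 : σ ∈ LastLe (b + 2) 2) (h2 : τ ∈ MinLate b n) :
    Glue n b (glue b σ τ) σ τ := by
  obtain ⟨h1, -, h3⟩ := h1
  obtain ⟨h4, -, h6⟩ := h2
  rw [show b + 2 - 1 = b + 1 by ring] at h3
  exact ⟨h1, by omega, h4, h6, rfl⟩

theorem glue_mem {n b : ℤ} (hb : 0 ≤ b) (hbn : b + 2 ≤ n) {σ τ : Perm ℤ}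
    (h1 : σ ∈ LastLe (b + 2) 2) (h2 : τ ∈ MinLate b n) : glue b σ τ ∈ TwoOneAt n b := by
  have h := glue_spec h1 h2
  have hlt := MinLate.lt h2
  set π := glue b σ τ
  have hl := h.last_lt
  have ha : 0 ≤ σ (b + 1) := h.hσ.ge (by omega)
  have eb : σ (σ⁻¹ b) = b := by simp
  have ec : σ (σ⁻¹ (b + 1)) = b + 1 := by simp
  have lb := h.inv_le (y := b) (by omega)
  have lc := h.inv_le (y := b + 1) (by omega)
  have eq : τ (τ⁻¹ b) = b := by simp
  have hq := h.min_late _ eq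
  refine ⟨fun x hx => ?_, h.apply_mid, σ⁻¹ b, σ⁻¹ (b + 1), τ⁻¹ b, ?_, fun i => ?_, fun k => ?_,
    fun i j k => h.occ_mid hlt h1.2.1 h2.2.1⟩
  · rcases hx with hx | hx
    · have := h.hσ x (by omega)
      rw [h.apply_small (by omega) (by omega), this]
    · have := h.hτ x (by omega)
      have := h.apply_right (x := x) (by omega)
      omega
  · have h3 := h1.2.1 (σ⁻¹ (b + 1)) (σ⁻¹ b) (b + 1)
    have : σ⁻¹ (b + 1) ≠ σ⁻¹ b := fun e => by have := σ⁻¹.injective e; omega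
    simp only [Occ, eb, ec] at h3
    omega
  · constructor
    · rintro ⟨hi, hi2⟩
      have : b ≤ σ i := by
        by_contra hc
        have := h.apply_small (x := i) (by omega) (by omega)
        omega
      have hz := (h.apply_large (by omega) this).2.2
      rwa [eq_comm, Equiv.Perm.inv_eq_iff_eq, eq_comm, @eq_comm _ i, Equiv.Perm.inv_eq_iff_eq,
        @eq_comm _ (b + 1)]
    · rintro (rfl | rfl)
      · exact ⟨by omega, (h.apply_large lb (by omega)).2.1⟩
      · exact ⟨by omega, (h.apply_large lc (by omega)).2.1⟩
  · constructor
    · rintro ⟨hk, hk2⟩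
      have := h.apply_right (x := k) (by omega)
      rw [eq_comm, Equiv.Perm.inv_eq_iff_eq]
      omega
    · rintro rfl
      have := h.apply_right hq
      omega

theorem glue_inj {n b : ℤ} (hb : 0 ≤ b) (hbn : b + 2 ≤ n) {σ τ σ' τ' : Perm ℤ}
    (h1 : σ ∈ LastLe (b + 2) 2) (h2 : τ ∈ MinLate b n) (h1' : σ' ∈ LastLe (b + 2) 2)
    (h2' : τ' ∈ MinLate b n) (e : glue b σ τ = glue b σ' τ') : σ = σ' ∧ τ = τ' := by
  have h := glue_spec h1 h2
  have h' := glue_spec h1' h2'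
  have hlt := MinLate.lt h2
  have hlt' := MinLate.lt h2'
  rw [← e] at h'
  set π := glue b σ τ
  have hq : τ (τ⁻¹ b) = b := by simp
  have hq2 := h.min_late _ hq
  have e1 : σ (b + 1) = σ' (b + 1) := by
    have := h.apply_right hq2
    have := h'.apply_right hq2
    have := h.last_lt
    have := h'.last_lt
    omega
  have hr : ∀ x, b + 2 ≤ x → τ x = τ' x := fun x hx => by
    have := h.apply_right hx
    have := h'.apply_right hx
    have := h.last_lt
    have := h'.last_lt
    omega
  have hm : τ * σ = τ' * σ' := by
    have := h.eq
    rw [h'.eq, mul_assoc, mul_assoc, e1] at this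
    exact (mul_left_cancel this).symm
  -- `τ` and `τ'` agree away from `b, b + 1`, hence take the same two values there
  have key : ∀ y, y = b ∨ y = b + 1 → τ y = τ' b ∨ τ y = τ' (b + 1) := by
    intro y hy
    have e2 : τ' (τ'⁻¹ (τ y)) = τ y := by simp
    set z := τ'⁻¹ (τ y)
    have : z = b ∨ z = b + 1 := by
      by_contra hz
      rcases lt_or_ge z b with hz1 | hz1
      · rw [h'.hτ z (by omega)] at e2
        have := h.hτ.ge (x := y) (by omega)
        omega
      · rw [← hr z (by omega)] at e2
        have := τ.injective e2
        omega
    rcases this with hz | hz <;> rw [hz] at e2 <;> omega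
  have k1 := key b (by omega)
  have k2 := key (b + 1) (by omega)
  have hτ : τ = τ' := by
    ext x
    rcases lt_or_ge x b with hx | hx
    · rw [h.hτ x (by omega), h'.hτ x (by omega)]
    · rcases lt_or_ge x (b + 2) with hx2 | hx2
      · have : x = b ∨ x = b + 1 := by omega
        rcases this with rfl | rfl <;> omega
      · exact hr x hx2
  exact ⟨mul_left_cancel (hτ ▸ hm), hτ⟩

/-- Every member of `TwoOneAt n b` is glued. With `x₁ < x₂` the positions of the two larger letters
on the left and `q` that of the smaller letter on the right, `τ` sends `b, b + 1` to
`π x₁, π x₂`, has its minimum `b` at `q`, and agrees with `π` elsewhere to the right of `b + 1`. -/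
theorem exists_glue {n b : ℤ} {π : Perm ℤ} (hπ : π ∈ TwoOneAt n b) :
    0 ≤ b ∧ b + 2 ≤ n ∧ ∃ σ ∈ LastLe (b + 2) 2, ∃ τ ∈ MinLate b n, glue b σ τ = π := by
  obtain ⟨hs, hmid, x₁, x₂, q, hx, hL, hR, ho⟩ := hπ
  obtain ⟨l1, g1⟩ := (hL x₁).2 (Or.inl rfl)
  obtain ⟨l2, g2⟩ := (hL x₂).2 (Or.inr rfl)
  obtain ⟨lq, gq⟩ := (hR q).2 rfl
  have hb : 0 ≤ b := by
    by_contra hb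
    have := hs.ge (x := b + 1)
    have := hs (b + 1)
    omega
  have ha : 0 ≤ π q := hs.ge (by omega)
  have hqn : q < n := by
    by_contra hc
    have := hs q (by omega)
    omega
  have h12 : π x₁ < π x₂ := by
    have := ho x₁ x₂ (b + 1)
    have : π x₁ ≠ π x₂ := fun e => by have := π.injective e; omega
    simp only [Occ, hmid] at *
    omega
  have hinj : ∀ {x y}, π x = π y → x = y := fun h => π.injective h
  let g : ℤ → ℤ := fun x => if x < b then x else if x = b then π x₁ else
    if x = b + 1 then π x₂ else if x = q then b else π x
  have hg : ∀ x, g x = if x < b then x else if x = b then π x₁ else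
    if x = b + 1 then π x₂ else if x = q then b else π x := fun x => rfl
  have hgr : ∀ x, b + 1 < x → x ≠ q → b < π x := fun x h1 h2 => by
    have h3 := (hR x)
    have : π x ≠ b := fun e => by
      rw [← hmid] at e
      have := hinj e
      omega
    omega
  have g_inj : Function.Injective g := by
    intro x y hxy
    simp only [hg] at hxy
    have i1 := @hinj x y
    have i2 := @hinj x₁ x
    have i3 := @hinj x₂ x
    have i4 := @hinj x₁ y
    have i5 := @hinj x₂ y
    have r1 := hgr x
    have r2 := hgr y
    split_ifs at hxy <;> omega
  have g_surj : Function.Surjective g := by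
    intro y
    rcases lt_or_ge y b with hy | hy
    · exact ⟨y, by simp [hg, hy]⟩
    rcases hy.eq_or_lt with rfl | hy
    · exact ⟨q, by grind⟩
    obtain ⟨x, rfl⟩ := π.surjective y
    rcases lt_or_ge x (b + 1) with hx' | hx'
    · rcases (hL x).1 ⟨hx', hy⟩ with rfl | rfl
      · exact ⟨b, by grind⟩
      · exact ⟨b + 1, by grind⟩
    · refine ⟨x, ?_⟩
      have : x ≠ b + 1 := fun h => by rw [h] at hy; omega
      have : x ≠ q := fun h => by rw [h] at hy; omega
      grind
  let τ : Perm ℤ := Equiv.ofBijective g ⟨g_inj, g_surj⟩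
  have hτ : ∀ x, τ x = if x < b then x else if x = b then π x₁ else
    if x = b + 1 then π x₂ else if x = q then b else π x := fun x => rfl
  let σ : Perm ℤ := τ⁻¹ * (Equiv.swap (π q) b * π)
  have hσ : ∀ x, σ x = τ⁻¹ (Equiv.swap (π q) b (π x)) := fun x => rfl
  have hlast : σ (b + 1) = π q := by
    rw [hσ, hmid, Equiv.swap_apply_right, Equiv.Perm.inv_eq_iff_eq, hτ, if_pos gq]
  have hG : Glue n b π σ τ := by
    refine ⟨?_, by omega, ?_, ?_, ?_⟩
    · intro x hx
      rw [hσ, Equiv.Perm.inv_eq_iff_eq]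
      by_cases hxq : x = q
      · rw [hxq, Equiv.swap_apply_left]
        grind
      · have : π x ≠ π q := fun h => hxq (hinj h)
        have : π x ≠ π (b + 1) := fun h => by have := hinj h; omega
        rw [Equiv.swap_apply_of_ne_of_ne ‹_› (by omega)]
        have := hs x
        grind
    · intro x hx
      have := hs x
      have := @hs.lt
      grind
    · intro x hx
      rw [hτ] at hx
      have := @hinj x (b + 1)
      grind
    · rw [hlast]
      simp only [σ, ← mul_assoc, Equiv.swap_mul_self, mul_inv_cancel_right]
      simp
  have hlt : τ b < τ (b + 1) := by
    rw [hτ, hτ]; simpa using h12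
  refine ⟨hb, by omega, σ, ⟨hG.hσ, hG.avoids_left hlt ho, ?_⟩, τ,
    ⟨hG.hτ, hG.avoids_right hlt ho, hG.min_late⟩, hG.eq.symm⟩
  rw [show b + 2 - 1 = b + 1 by ring]
  omega

theorem card_twoOneAt (n b : ℤ) (hb : 0 ≤ b) (hbn : b + 2 ≤ n) :
    (TwoOneAt n b).ncard = (LastLe (b + 2) 2).ncard * (LastLe (n - b) 2).ncard := by
  rw [← card_minLate b n, ← Set.ncard_prod]
  symm
  refine Set.ncard_congr (fun p _ => glue b p.1 p.2) ?_ ?_ ?_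
  · rintro ⟨σ, τ⟩ ⟨h1, h2⟩
    exact glue_mem hb hbn h1 h2
  · rintro ⟨σ, τ⟩ ⟨σ', τ'⟩ ⟨h1, h2⟩ ⟨h1', h2'⟩ h
    obtain ⟨rfl, rfl⟩ := glue_inj hb hbn h1 h2 h1' h2' h
    rfl
  · intro π hπ
    obtain ⟨-, -, σ, hσ, τ, hτ, e⟩ := exists_glue hπ
    exact ⟨(σ, τ), ⟨hσ, hτ⟩, e⟩

theorem twoOneAt_bounds {n b : ℤ} {π : Perm ℤ} (hπ : π ∈ TwoOneAt n b) :
    1 ≤ b ∧ b + 3 ≤ n := by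
  obtain ⟨hb, hbn, σ, ⟨h1, -, h2⟩, τ, ⟨h3, -, h4⟩, -⟩ := exists_glue hπ
  have h5 := h1.ge (x := b + 2 - 1) (by omega)
  have h6 := h4 (τ⁻¹ b) (by simp)
  have h7 := h3.inv.lt (x := b) (by omega)
  omega

/-! ### The position of the common middle letter -/

/-- Permutations of `0, …, n - 1` with exactly two occurrences of 321, sharing the middle letter
(at position `p`) and the last letter (at position `q`). -/
def TwoOne (n : ℤ) : Set (Perm ℤ) :=
  {π | SuppIn 0 n π ∧ ∃ x₁ x₂ p q, x₁ < x₂ ∧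
    (∀ i, i < p ∧ π p < π i ↔ i = x₁ ∨ i = x₂) ∧ (∀ k, p < k ∧ π k < π p ↔ k = q) ∧
    ∀ i j k, Occ π i j k → j = p}

/-- With two larger letters to its left and one smaller letter to its right, the letter at
position `p` has `p - 2 + 1` smaller letters in total. -/
theorem mid_position {n p x₁ x₂ q : ℤ} {π : Perm ℤ} (hs : SuppIn 0 n π) (hx : x₁ < x₂)
    (hL : ∀ i, i < p ∧ π p < π i ↔ i = x₁ ∨ i = x₂) (hR : ∀ k, p < k ∧ π k < π p ↔ k = q) :
    p = π p + 1 := by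
  obtain ⟨l1, g1⟩ := (hL x₁).2 (Or.inl rfl)
  obtain ⟨l2, g2⟩ := (hL x₂).2 (Or.inr rfl)
  obtain ⟨lq, gq⟩ := (hR q).2 rfl
  have hx1 : 0 ≤ x₁ := by
    by_contra hc
    have h1 := hs x₁ (by omega)
    have h2 := hs p
    have h3 := hs.ge (x := p)
    omega
  have hb : 0 ≤ π p := hs.ge (by omega)
  have hq : 0 ≤ π q := hs.ge (by omega)
  have key : (insert q (((Finset.Ico 0 p).erase x₁).erase x₂)).image π = Finset.Ico 0 (π p) := by
    ext y
    simp only [Finset.mem_image, Finset.mem_insert, Finset.mem_erase, Finset.mem_Ico]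
    constructor
    · rintro ⟨x, rfl | ⟨h1, h2, h3, h4⟩, rfl⟩
      · omega
      · have h5 := hL x
        have h6 : 0 ≤ π x := hs.ge h3
        have h7 : π x ≠ π p := fun h => by have := π.injective h; omega
        omega
    · rintro ⟨h1, h2⟩
      obtain ⟨x, rfl⟩ := π.surjective y
      refine ⟨x, ?_, rfl⟩
      have h3 := hL x
      have h4 := hR x
      have h5 : x ≠ p := fun h => by rw [h] at h2; omega
      have h6 := hs x
      omega
  have hc := congrArg Finset.card key
  rw [Finset.card_image_of_injective _ π.injective, Finset.card_insert_of_notMem (by simp; omega),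
    Finset.card_erase_of_mem (by simp; omega), Finset.card_erase_of_mem (by simp; omega),
    Int.card_Ico, Int.card_Ico] at hc
  omega

theorem twoOne_eq (n : ℤ) : TwoOne n = ⋃ i ∈ Finset.range (n - 3).toNat, TwoOneAt n (i + 1) := by
  ext π
  simp only [Set.mem_iUnion, Finset.mem_range, exists_prop]
  constructor
  · rintro ⟨hs, x₁, x₂, p, q, hx, hL, hR, ho⟩
    have hp := mid_position hs hx hL hR
    have hmem : π ∈ TwoOneAt n (π p) :=
      ⟨hs, by rw [← hp], x₁, x₂, q, hx, by rwa [← hp], by rwa [← hp], by rwa [← hp]⟩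
    have := twoOneAt_bounds hmem
    refine ⟨(π p - 1).toNat, by omega, ?_⟩
    rwa [Int.toNat_of_nonneg (by omega), sub_add_cancel]
  · rintro ⟨i, -, hs, hp, x₁, x₂, q, hx, hL, hR, ho⟩
    exact ⟨hs, x₁, x₂, i + 1 + 1, q, hx, by rwa [hp], by rwa [hp], ho⟩

theorem card_twoOne (n : ℕ) : (TwoOne n).ncard = ballotZ 8 ((n : ℤ) - 4) := by
  rw [twoOne_eq]
  have hfin : ∀ b, (TwoOneAt n b).Finite := fun b => finite_of_suppIn fun π h => h.1
  have hdis : ∀ b c, b ≠ c → Disjoint (TwoOneAt n b) (TwoOneAt n c) := by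
    intro b c hbc
    rw [Set.disjoint_left]
    rintro π ⟨hs, hp, x₁, x₂, q, hx, hL, hR, ho⟩ ⟨-, -, -, -, -, -, -, -, ho'⟩
    obtain ⟨l1, g1⟩ := (hL x₁).2 (Or.inl rfl)
    obtain ⟨lq, gq⟩ := (hR q).2 rfl
    have := ho' x₁ (b + 1) q ⟨l1, lq, by omega, by omega⟩
    omega
  have hsum : ∀ s : Finset ℕ, (⋃ i ∈ s, TwoOneAt n ((i : ℤ) + 1)).ncard
      = ∑ i ∈ s, (TwoOneAt n ((i : ℤ) + 1)).ncard := by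
    intro s
    induction s using Finset.induction_on with
    | empty => simp
    | insert a s ha ih =>
      have hf : (⋃ i ∈ s, TwoOneAt n ((i : ℤ) + 1)).Finite :=
        s.finite_toSet.biUnion fun i _ => hfin _
      rw [Finset.set_biUnion_insert, Set.ncard_union_eq ?_ (hfin _) hf, ih, Finset.sum_insert ha]
      rw [Set.disjoint_iUnion₂_right]
      intro i hi
      refine hdis _ _ fun h => ha ?_
      have : a = i := by omega
      exact this ▸ hi
  rw [hsum]
  rcases lt_or_ge n 4 with hn | hn
  · have e : ((n : ℤ) - 3).toNat = 0 := by omega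
    rw [e, ballotZ, if_neg (by omega)]
    rfl
  · obtain ⟨m, rfl⟩ := Nat.exists_eq_add_of_le' hn
    have e1 : (((m + 4 : ℕ) : ℤ) - 3).toNat = m + 1 := by omega
    have e2 : ((m + 4 : ℕ) : ℤ) - 4 = m := by push_cast; ring
    rw [e1, e2, ballotZ, if_pos (by omega), Int.toNat_natCast, show 8 = 4 + 4 from rfl,
      ← ballot_conv 4 m 4,
      Finset.Nat.sum_antidiagonal_eq_sum_range_succ (fun i j => ballot 4 i * ballot 4 j)]
    refine Finset.sum_congr rfl fun i hi => ?_
    rw [Finset.mem_range] at hi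
    rw [card_twoOneAt _ _ (by omega) (by push_cast; omega), ← card_lastLe_two,
      ← card_lastLe_two]
    have e3 : (i : ℤ) + 1 + 2 = i + 3 := by ring
    have e4 : ((m + 4 : ℕ) : ℤ) - (i + 1) = ((m - i : ℕ) : ℤ) + 3 := by omega
    rw [e3, e4]

/-! ### The two symmetric cases -/

/-- Permutations of `0, …, n - 1` with exactly two occurrences of 321, sharing the first letter
and the middle letter. -/
def OneTwo (n : ℤ) : Set (Perm ℤ) :=
  {π | SuppIn 0 n π ∧ ∃ x q₁ q₂ p, q₁ < q₂ ∧
    (∀ i, i < p ∧ π p < π i ↔ i = x) ∧ (∀ k, p < k ∧ π k < π p ↔ k = q₁ ∨ k = q₂) ∧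
    ∀ i j k, Occ π i j k → j = p}

/-- The reverse-complement. -/
def revComp (n : ℤ) (π : Perm ℤ) : Perm ℤ := reflect n * π * reflect n

theorem revComp_apply (n x : ℤ) (π : Perm ℤ) : revComp n π x = n - 1 - π (n - 1 - x) := rfl

theorem revComp_revComp (n : ℤ) (π : Perm ℤ) : revComp n (revComp n π) = π := by
  ext x; simp [revComp_apply]

theorem SuppIn.revComp {n : ℤ} {π : Perm ℤ} (h : SuppIn 0 n π) : SuppIn 0 n (revComp n π) := by
  intro x hx
  rw [revComp_apply, h _ (by omega)]
  omega

theorem Occ.revComp {n : ℤ} {π : Perm ℤ} {i j k : ℤ} (h : Occ (revComp n π) i j k) :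
    Occ π (n - 1 - k) (n - 1 - j) (n - 1 - i) := by
  obtain ⟨h1, h2, h3, h4⟩ := h
  simp only [revComp_apply] at h3 h4
  exact ⟨by omega, by omega, by omega, by omega⟩

theorem revComp_mem_oneTwo {n : ℤ} {π : Perm ℤ} (h : π ∈ TwoOne n) : revComp n π ∈ OneTwo n := by
  obtain ⟨hs, x₁, x₂, p, q, hx, hL, hR, ho⟩ := h
  refine ⟨hs.revComp, n - 1 - q, n - 1 - x₂, n - 1 - x₁, n - 1 - p, by omega, fun i => ?_,
    fun k => ?_, fun i j k h => ?_⟩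
  · have := hR (n - 1 - i)
    simp only [revComp_apply, sub_sub_cancel]
    omega
  · have := hL (n - 1 - k)
    simp only [revComp_apply, sub_sub_cancel]
    omega
  · have := ho _ _ _ h.revComp
    omega

theorem revComp_mem_twoOne {n : ℤ} {π : Perm ℤ} (h : π ∈ OneTwo n) : revComp n π ∈ TwoOne n := by
  obtain ⟨hs, x, q₁, q₂, p, hx, hL, hR, ho⟩ := h
  refine ⟨hs.revComp, n - 1 - q₂, n - 1 - q₁, n - 1 - p, n - 1 - x, by omega, fun i => ?_,
    fun k => ?_, fun i j k h => ?_⟩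
  · have := hR (n - 1 - i)
    simp only [revComp_apply, sub_sub_cancel]
    omega
  · have := hL (n - 1 - k)
    simp only [revComp_apply, sub_sub_cancel]
    omega
  · have := ho _ _ _ h.revComp
    omega

theorem card_oneTwo (n : ℤ) : (OneTwo n).ncard = (TwoOne n).ncard := by
  refine Set.ncard_congr (fun π _ => revComp n π) (fun π h => revComp_mem_twoOne h) ?_
    fun π h => ⟨revComp n π, revComp_mem_oneTwo h, revComp_revComp n π⟩
  intro π π' _ _ h
  rw [← revComp_revComp n π, ← revComp_revComp n π', h]

/-- Permutations of `0, …, n - 1` with exactly two occurrences of 321, which moreover share the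
middle position. -/
def CommonMid (n : ℤ) : Set (Perm ℤ) :=
  {π | SuppIn 0 n π ∧ ∃ i₁ k₁ i₂ k₂ p, (i₁ ≠ i₂ ∨ k₁ ≠ k₂) ∧ Occ π i₁ p k₁ ∧ Occ π i₂ p k₂ ∧
    ∀ i j k, Occ π i j k → j = p ∧ (i = i₁ ∧ k = k₁ ∨ i = i₂ ∧ k = k₂)}

/-- If there are `u` larger letters to the left of the common middle letter and `v` smaller ones
to its right, then `u * v = 2`. -/
theorem commonMid_eq (n : ℤ) : CommonMid n = TwoOne n ∪ OneTwo n := by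
  ext π
  constructor
  · rintro ⟨hs, i₁, k₁, i₂, k₂, p, hne, o1, o2, ho⟩
    have cross : ∀ i k, i < p → p < k → π p < π i → π k < π p →
        (i = i₁ ∧ k = k₁ ∨ i = i₂ ∧ k = k₂) := fun i k a b c d => (ho i p k ⟨a, b, d, c⟩).2
    obtain ⟨a1, a2, a3, a4⟩ := o1
    obtain ⟨b1, b2, b3, b4⟩ := o2
    have hc := cross i₁ k₂ a1 b2 a4 b3
    have hL : ∀ i, i < p ∧ π p < π i ↔ i = i₁ ∨ i = i₂ := fun i => by
      constructor
      · rintro ⟨h1, h2⟩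
        have := cross i k₁ h1 a2 h2 a3
        omega
      · rintro (rfl | rfl) <;> constructor <;> assumption
    have hR : ∀ k, p < k ∧ π k < π p ↔ k = k₁ ∨ k = k₂ := fun k => by
      constructor
      · rintro ⟨h1, h2⟩
        have := cross i₁ k a1 h1 a4 h2
        omega
      · rintro (rfl | rfl) <;> constructor <;> assumption
    have ho' : ∀ i j k, Occ π i j k → j = p := fun i j k h => (ho i j k h).1
    rcases lt_trichotomy i₁ i₂ with hi | hi | hi
    · exact Or.inl ⟨hs, i₁, i₂, p, k₁, hi, hL, fun k => by rw [hR]; omega, ho'⟩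
    · rcases lt_trichotomy k₁ k₂ with hk | hk | hk
      · exact Or.inr ⟨hs, i₁, k₁, k₂, p, hk, fun i => by rw [hL]; omega, hR, ho'⟩
      · omega
      · exact Or.inr ⟨hs, i₁, k₂, k₁, p, hk, fun i => by rw [hL]; omega,
          fun k => by rw [hR]; omega, ho'⟩
    · exact Or.inl ⟨hs, i₂, i₁, p, k₁, hi, fun i => by rw [hL]; omega,
        fun k => by rw [hR]; omega, ho'⟩
  · rintro (⟨hs, x₁, x₂, p, q, hx, hL, hR, ho⟩ | ⟨hs, x, q₁, q₂, p, hx, hL, hR, ho⟩)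
    · obtain ⟨l1, g1⟩ := (hL x₁).2 (Or.inl rfl)
      obtain ⟨l2, g2⟩ := (hL x₂).2 (Or.inr rfl)
      obtain ⟨lq, gq⟩ := (hR q).2 rfl
      refine ⟨hs, x₁, q, x₂, q, p, by omega, ⟨l1, lq, gq, g1⟩, ⟨l2, lq, gq, g2⟩,
        fun i j k h => ?_⟩
      obtain rfl := ho i j k h
      obtain ⟨h1, h2, h3, h4⟩ := h
      have := (hL i).1 ⟨h1, h4⟩
      have := (hR k).1 ⟨h2, h3⟩
      omega
    · obtain ⟨l1, g1⟩ := (hR q₁).2 (Or.inl rfl)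
      obtain ⟨l2, g2⟩ := (hR q₂).2 (Or.inr rfl)
      obtain ⟨lx, gx⟩ := (hL x).2 rfl
      refine ⟨hs, x, q₁, x, q₂, p, by omega, ⟨lx, l1, g1, gx⟩, ⟨lx, l2, g2, gx⟩,
        fun i j k h => ?_⟩
      obtain rfl := ho i j k h
      obtain ⟨h1, h2, h3, h4⟩ := h
      have := (hL i).1 ⟨h1, h4⟩
      have := (hR k).1 ⟨h2, h3⟩
      omega

theorem card_commonMid (n : ℕ) : (CommonMid n).ncard = 2 * ballotZ 8 ((n : ℤ) - 4) := by
  rw [commonMid_eq, Set.ncard_union_eq ?_ (finite_of_suppIn fun π h => h.1)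
    (finite_of_suppIn fun π h => h.1), card_oneTwo, card_twoOne, two_mul]
  rw [Set.disjoint_left]
  rintro π ⟨hs, x₁, x₂, p, q, hx, hL, hR, ho⟩ ⟨-, x, q₁, q₂, p', hx', hL', hR', ho'⟩
  obtain ⟨l1, g1⟩ := (hL x₁).2 (Or.inl rfl)
  obtain ⟨lq, gq⟩ := (hR q).2 rfl
  obtain rfl := ho' x₁ p q ⟨l1, lq, gq, g1⟩
  have h1 := (hL' x₁).1 ((hL x₁).2 (Or.inl rfl))
  have h2 := (hL' x₂).1 ((hL x₂).2 (Or.inr rfl))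
  omega

/-! ### From permutations of `Fin n` to permutations of `ℤ` -/

/-- `Fin n` as an interval of integers. -/
def finEquivInterval (n : ℕ) : Fin n ≃ {x : ℤ // 0 ≤ x ∧ x < n} where
  toFun i := ⟨i, by omega⟩
  invFun x := ⟨x.1.toNat, by have := x.2; omega⟩
  left_inv i := by simp
  right_inv x := Subtype.ext (by have := x.2; simp; omega)

/-- Extension of a permutation of `Fin n` to `ℤ` by fixed points. -/
def toInt (n : ℕ) : Perm (Fin n) ≃ {f : Perm ℤ // ∀ a, ¬ (0 ≤ a ∧ a < (n : ℤ)) → f a = a} :=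
  (finEquivInterval n).permCongr.trans
    (Equiv.Perm.subtypeEquivSubtypePerm fun x : ℤ => 0 ≤ x ∧ x < n)

theorem toInt_apply {n : ℕ} (π : Perm (Fin n)) (i : Fin n) :
    (toInt n π).1 (i : ℤ) = (π i : ℕ) := by
  have h := Equiv.Perm.ofSubtype_apply_coe ((finEquivInterval n).permCongr π)
    (finEquivInterval n i)
  have h2 : (finEquivInterval n).permCongr π (finEquivInterval n i) = finEquivInterval n (π i) := by
    simp [Equiv.permCongr_apply]
  rw [h2] at h
  exact h

theorem toInt_suppIn {n : ℕ} (π : Perm (Fin n)) : SuppIn 0 n (toInt n π).1 :=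
  fun x hx => (toInt n π).2 x (by omega)

theorem occ_toInt {n : ℕ} (π : Perm (Fin n)) (t : Fin n × Fin n × Fin n) :
    Occ (toInt n π).1 t.1 t.2.1 t.2.2 ↔ IsOcc321 π t := by
  simp only [Occ, IsOcc321, toInt_apply, Fin.lt_def]
  omega

theorem exists_of_occ_toInt {n : ℕ} {π : Perm (Fin n)} {i j k : ℤ}
    (h : Occ (toInt n π).1 i j k) :
    ∃ t : Fin n × Fin n × Fin n, (t.1 : ℤ) = i ∧ (t.2.1 : ℤ) = j ∧ (t.2.2 : ℤ) = k := by
  have hs := toInt_suppIn π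
  obtain ⟨h1, h2, h3, h4⟩ := h
  have hi : 0 ≤ i := by
    by_contra hc
    have := hs i (by omega)
    have := hs j
    have := hs.ge (x := j)
    omega
  have hk : k < n := by
    by_contra hc
    have := hs k (by omega)
    have := hs j
    have := hs.lt (x := j)
    omega
  exact ⟨(⟨i.toNat, by omega⟩, ⟨j.toNat, by omega⟩, ⟨k.toNat, by omega⟩), by simp; omega,
    by simp; omega, by simp; omega⟩

theorem commonMid_iff {n : ℕ} (π : Perm (Fin n)) :
    (occ321Count n π = 2 ∧ ∀ t₁ t₂ : Fin n × Fin n × Fin n,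
      IsOcc321 π t₁ → IsOcc321 π t₂ → t₁.2.1 = t₂.2.1) ↔ (toInt n π).1 ∈ CommonMid n := by
  rw [occ321Count, Nat.card_eq_two_iff]
  constructor
  · rintro ⟨⟨⟨t₁, h1⟩, ⟨t₂, h2⟩, hne, huniv⟩, hmid⟩
    have hm := hmid t₁ t₂ h1 h2
    refine ⟨toInt_suppIn π, t₁.1, t₁.2.2, t₂.1, t₂.2.2, t₁.2.1, ?_, (occ_toInt π t₁).2 h1, ?_, ?_⟩
    · by_contra hc
      apply hne
      rw [Subtype.mk.injEq]
      refine Prod.ext (Fin.ext ?_) (Prod.ext hm (Fin.ext ?_)) <;> omega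
    · rw [hm]
      exact (occ_toInt π t₂).2 h2
    · intro i j k h
      obtain ⟨t, rfl, rfl, rfl⟩ := exists_of_occ_toInt h
      rw [occ_toInt] at h
      have ht : (⟨t, h⟩ : {t // IsOcc321 π t}) ∈ ({⟨t₁, h1⟩, ⟨t₂, h2⟩} : Set _) := by
        rw [huniv]; trivial
      rw [Set.mem_insert_iff, Set.mem_singleton_iff, Subtype.mk.injEq, Subtype.mk.injEq] at ht
      refine ⟨by rw [hmid t t₁ h h1], ?_⟩
      rcases ht with rfl | rfl
      · exact Or.inl ⟨rfl, rfl⟩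
      · exact Or.inr ⟨rfl, rfl⟩
  · rintro ⟨-, i₁, k₁, i₂, k₂, p, hne, o1, o2, ho⟩
    obtain ⟨t₁, rfl, rfl, rfl⟩ := exists_of_occ_toInt o1
    obtain ⟨t₂, rfl, e2, rfl⟩ := exists_of_occ_toInt o2
    rw [← e2, occ_toInt] at o2
    rw [occ_toInt] at o1
    refine ⟨⟨⟨t₁, o1⟩, ⟨t₂, o2⟩, ?_, ?_⟩, fun t t' h h' => ?_⟩
    · intro h
      rw [Subtype.mk.injEq] at h
      subst h
      simp at hne
    · ext ⟨t, h⟩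
      simp only [Set.mem_insert_iff, Set.mem_singleton_iff, Subtype.mk.injEq, Set.mem_univ,
        iff_true]
      obtain ⟨h1, h2⟩ := ho _ _ _ ((occ_toInt π t).2 h)
      rcases h2 with h2 | h2
      · exact Or.inl (Prod.ext (Fin.ext (by omega)) (Prod.ext (Fin.ext (by omega))
          (Fin.ext (by omega))))
      · exact Or.inr (Prod.ext (Fin.ext (by omega)) (Prod.ext (Fin.ext (by omega))
          (Fin.ext (by omega))))
    · have h1 := (ho _ _ _ ((occ_toInt π t).2 h)).1
      have h2 := (ho _ _ _ ((occ_toInt π t').2 h')).1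
      exact Fin.ext (by omega)

/-- The number of permutations of `[n]` containing exactly two occurrences of the
pattern 321 such that the two occurrences have the same middle position is
`2·C^{(8)}_{n-4}`, with `C^{(k)}_m = 0` for `m < 0`. -/
theorem two321_common_middle_count (n : ℕ) :
    Nat.card {π : Equiv.Perm (Fin n) // occ321Count n π = 2 ∧
        ∀ t₁ t₂ : Fin n × Fin n × Fin n,
          IsOcc321 π t₁ → IsOcc321 π t₂ → t₁.2.1 = t₂.2.1}
      = 2 * ballotZ 8 ((n : ℤ) - 4) := by
  rw [← card_commonMid, ← Nat.card_coe_set_eq]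
  refine Nat.card_eq_of_bijective
    (fun π => ⟨(toInt n π.1).1, (commonMid_iff π.1).1 π.2⟩) ⟨fun π π' h => ?_, fun π => ?_⟩
  · rw [Subtype.mk.injEq] at h
    exact Subtype.ext ((toInt n).injective (Subtype.ext h))
  · obtain ⟨σ, hσ⟩ := (toInt n).surjective ⟨π.1, fun a ha => π.2.1 a (by omega)⟩
    have e : (toInt n σ).1 = π.1 := congrArg Subtype.val hσ
    exact ⟨⟨σ, (commonMid_iff σ).2 (e ▸ π.2)⟩, Subtype.ext e⟩
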